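/- arXiv:1611.07267 — 3 statements merged into one kernel-verified Lean document; each statement's English description precedes it below -/
import Mathlib

section
/- If X is a Urysohn almost discretely Lindelöf space, then |X| ≤ 2^{χ(X)}. In particular, every first-countable Urysohn almost discretely Lindelöf space has cardinality at most the continuum. -/
open Cardinal Set Topology

universe u

/-- A subset `D` is discrete (as a subspace): every point of `D` has an open
neighbourhood meeting `D` only in that point. -/
def IsDiscreteSubset {X : Type u} [TopologicalSpace X] (D : Set X) : Prop :=
  ∀ x ∈ D, ∃ U : Set X, IsOpen U ∧ U ∩ D = {x}

/-- `X` is almost discretely Lindelöf: every discrete subset is contained in a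
Lindelöf subspace. -/
def AlmostDiscretelyLindelof (X : Type u) [TopologicalSpace X] : Prop :=
  ∀ D : Set X, IsDiscreteSubset D → ∃ L : Set X, IsLindelof L ∧ D ⊆ L

/-- The character of `X` is at most `κ`: every point has an open neighbourhood
base of cardinality at most `κ`. -/
def HasCharacterLE (X : Type u) [TopologicalSpace X] (κ : Cardinal.{u}) : Prop :=
  ∀ x : X, ∃ B : Set (Set X), #B ≤ κ ∧ (∀ U ∈ B, IsOpen U ∧ x ∈ U) ∧
    ∀ V ∈ nhds x, ∃ U ∈ B, U ⊆ V

/-- `R` is right-separated: it carries a well-order in which each point has a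
neighbourhood avoiding all strictly later points (initial segments are open). -/
def RightSeparated {X : Type u} [TopologicalSpace X] (R : Set X) : Prop :=
  ∃ r : R → R → Prop, IsWellOrder R r ∧
    ∀ a : R, ∃ U : Set X, IsOpen U ∧ (a : X) ∈ U ∧ ∀ b : R, (b : X) ∈ U → ¬ r a b

/-- `R` is left-separated: it carries a well-order in which each point has a
neighbourhood avoiding all strictly earlier points (initial segments are closed). -/
def LeftSeparated {X : Type u} [TopologicalSpace X] (R : Set X) : Prop :=
  ∃ r : R → R → Prop, IsWellOrder R r ∧
    ∀ a : R, ∃ U : Set X, IsOpen U ∧ (a : X) ∈ U ∧ ∀ b : R, (b : X) ∈ U → ¬ r b a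

/-- The θ-closure operator: `x ∈ thetaCl A` iff the closure of every open
neighbourhood of `x` meets `A`. -/
def thetaCl {X : Type u} [TopologicalSpace X] (A : Set X) : Set X :=
  {x | ∀ U : Set X, IsOpen U → x ∈ U → (closure U ∩ A).Nonempty}

/-- `A` is θ-closed if it coincides with its θ-closure operator value. -/
def IsThetaClosed {X : Type u} [TopologicalSpace X] (A : Set X) : Prop :=
  thetaCl A = A

/-- `[A]_θ`, the smallest θ-closed set containing `A`. -/
def thetaClosure {X : Type u} [TopologicalSpace X] (A : Set X) : Set X :=
  ⋂₀ {B : Set X | A ⊆ B ∧ IsThetaClosed B}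

/-- A (well-ordered) sequence is free if at every cut the closures of the two
pieces are disjoint. -/
def IsFreeSeq {X : Type u} [TopologicalSpace X] {ι : Type u} [LinearOrder ι]
    (f : ι → X) : Prop :=
  ∀ i : ι, closure (f '' {j | j < i}) ∩ closure (f '' {j | i ≤ j}) = ∅

/-- A (well-ordered) sequence is θ-free if at every cut the θ-closure of the
initial piece is disjoint from the closure of the final piece. -/
def IsThetaFreeSeq {X : Type u} [TopologicalSpace X] {ι : Type u} [LinearOrder ι]
    (f : ι → X) : Prop :=
  ∀ i : ι, thetaClosure (f '' {j | j < i}) ∩ closure (f '' {j | i ≤ j}) = ∅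

/-- A cellular family: pairwise disjoint nonempty open sets. -/
def IsCellularFamily {X : Type u} [TopologicalSpace X] (𝒰 : Set (Set X)) : Prop :=
  (∀ U ∈ 𝒰, IsOpen U ∧ U.Nonempty) ∧ 𝒰.PairwiseDisjoint id

/-- `X` is cellular-Lindelöf: every cellular family admits a Lindelöf subspace
meeting each of its members. -/
def CellularLindelof (X : Type u) [TopologicalSpace X] : Prop :=
  ∀ 𝒰 : Set (Set X), IsCellularFamily 𝒰 →
    ∃ L : Set X, IsLindelof L ∧ ∀ U ∈ 𝒰, (U ∩ L).Nonempty

/-- `lam` is a caliber of `X`: any `lam`-many nonempty open sets include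
`lam`-many with a common point. -/
def IsCaliber (X : Type u) [TopologicalSpace X] (lam : Cardinal.{u}) : Prop :=
  ∀ (ι : Type u) (U : ι → Set X), #ι = lam →
    (∀ i, IsOpen (U i) ∧ (U i).Nonempty) →
    ∃ S : Set ι, #S = lam ∧ (⋂ i ∈ S, U i).Nonempty

/-- Closing off a set under `2^κ` many `κ`-ary operations. -/
theorem exists_closed_under {X : Type u} (κ : Cardinal.{u}) (hκ : ℵ₀ ≤ κ) (A : Set X)
    (hA : #A ≤ 2 ^ κ) (J P : Type u) (hJ : #J ≤ 2 ^ κ) (hP : #P ≤ κ) (op : J → (P → X) → X) :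
    ∃ Y : Set X, A ⊆ Y ∧ #Y ≤ 2 ^ κ ∧ ∀ j f, (∀ p, f p ∈ Y) → op j f ∈ Y := by
  let β : A ⊕ J → Type u := fun s => Sum.casesOn s (fun _ => PEmpty) (fun _ => P)
  let ev : WType β → X := WType.elim X (fun s => match s with
    | ⟨Sum.inl a, _⟩ => a.1
    | ⟨Sum.inr j, f⟩ => op j f)
  have h2 : ℵ₀ ≤ (2 : Cardinal.{u}) ^ κ := hκ.trans (cantor κ).le
  have hpow : ∀ c : Cardinal.{u}, c ≤ κ → ((2 : Cardinal.{u}) ^ κ) ^ c ≤ 2 ^ κ := by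
    intro c hc
    rw [← power_mul]
    apply power_le_power_left two_ne_zero
    exact (mul_le_mul_right hc κ).trans (mul_eq_self hκ).le
  have hW : #(WType β) ≤ 2 ^ κ := by
    apply WType.cardinalMk_le_of_le
    calc (Cardinal.sum fun a => ((2 : Cardinal.{u}) ^ κ) ^ #(β a))
        ≤ Cardinal.sum (fun _ : A ⊕ J => (2 : Cardinal.{u}) ^ κ) := by
          apply Cardinal.sum_le_sum
          rintro (a | j)
          · apply hpow
            simp [β]
          · exact hpow _ hP
      _ = #(A ⊕ J) * 2 ^ κ := by simp
      _ ≤ 2 ^ κ * 2 ^ κ := by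
          gcongr
          rw [mk_sum, lift_id, lift_id]
          exact add_le_of_le h2 hA hJ
      _ = 2 ^ κ := mul_eq_self h2
  refine ⟨range ev, ?_, mk_range_le.trans hW, ?_⟩
  · intro a ha
    exact ⟨WType.mk (Sum.inl ⟨a, ha⟩) PEmpty.elim, rfl⟩
  · intro j f hf
    choose g hg using hf
    refine ⟨WType.mk (Sum.inr j) g, ?_⟩
    have : f = fun p => ev (g p) := funext fun p => (hg p).symm
    rw [this]
    rfl

/-- Local bases indexed by a fixed type. -/
theorem exists_base {X : Type u} [TopologicalSpace X] {κ : Cardinal.{u}}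
    (hχ : HasCharacterLE X κ) (K : Type u) (hK : #K = κ) :
    ∃ B : X → K → Set X, (∀ x k, IsOpen (B x k) ∧ x ∈ B x k) ∧
      ∀ x, ∀ V ∈ nhds x, ∃ k, B x k ⊆ V := by
  have : ∀ x : X, ∃ b : K → Set X, (∀ k, IsOpen (b k) ∧ x ∈ b k) ∧
      ∀ V ∈ nhds x, ∃ k, b k ⊆ V := by
    intro x
    obtain ⟨B, hB, h1, h2⟩ := hχ x
    obtain ⟨U0, hU0, -⟩ := h2 univ Filter.univ_mem
    rw [← hK] at hB
    obtain ⟨i⟩ := hB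
    haveI : Nonempty B := ⟨⟨U0, hU0⟩⟩
    have hs := Function.invFun_surjective i.injective
    refine ⟨fun k => (Function.invFun i k).1, fun k => h1 _ (Function.invFun i k).2, ?_⟩
    intro V hV
    obtain ⟨U, hU, hUV⟩ := h2 V hV
    obtain ⟨k, hk⟩ := hs ⟨U, hU⟩
    exact ⟨k, by beta_reduce; rw [hk]; exact hUV⟩
  choose B h1 h2 using this
  exact ⟨B, h1, h2⟩

/-- Every set of size `≤ 2^κ` is in a θ-closed set of size `≤ 2^κ`. -/
theorem exists_theta_hull {X : Type u} [TopologicalSpace X] [T25Space X] {κ : Cardinal.{u}}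
    (hκ : ℵ₀ ≤ κ) (hχ : HasCharacterLE X κ) (A : Set X) (hA : #A ≤ 2 ^ κ) :
    ∃ Y : Set X, A ⊆ Y ∧ #Y ≤ 2 ^ κ ∧
      ∀ y, y ∉ Y → ∃ U, IsOpen U ∧ y ∈ U ∧ Disjoint (closure U) Y := by
  classical
  rcases isEmpty_or_nonempty X with hX | ⟨⟨x0⟩⟩
  · exact ⟨A, subset_rfl, hA, fun y => (hX.false y).elim⟩
  let K := κ.out
  have hK : #K = κ := mk_out κ
  obtain ⟨B, hB, hbase⟩ := exists_base hχ K hK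
  let Q : Set (K × K) → (K → X) → X → Prop := fun r a x =>
    (∀ k, a k ∈ closure (B x k)) ∧ r = {ij | a ij.2 ∈ closure (B x ij.1)}
  have huniq : ∀ r a x y, Q r a x → Q r a y → x = y := by
    rintro r a x y ⟨h1, h2⟩ ⟨h3, h4⟩
    by_contra hne
    obtain ⟨U, hxU, hU, V, hyV, hV, hd⟩ := exists_open_nhds_disjoint_closure hne
    obtain ⟨i, hi⟩ := hbase x U (hU.mem_nhds hxU)
    obtain ⟨j, hj⟩ := hbase y V (hV.mem_nhds hyV)
    obtain ⟨k, hk⟩ := hbase x (B x i ∩ B x j)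
      (((hB x i).1.inter (hB x j).1).mem_nhds ⟨(hB x i).2, (hB x j).2⟩)
    have e1 : a k ∈ closure (B x i) := closure_mono (hk.trans inter_subset_left) (h1 k)
    have e2 : a k ∈ closure (B x j) := closure_mono (hk.trans inter_subset_right) (h1 k)
    have e3 : (j, k) ∈ r := by rw [h2]; exact e2
    rw [h4] at e3
    exact hd.le_bot ⟨closure_mono hi e1, closure_mono hj e3⟩
  let op : Set (K × K) → (K → X) → X := fun r a =>
    if h : ∃ x, Q r a x then h.choose else x0
  have hop : ∀ r a x, Q r a x → op r a = x := by
    intro r a x h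
    have h' : ∃ x, Q r a x := ⟨x, h⟩
    have : op r a = h'.choose := dif_pos h'
    rw [this]
    exact huniq r a _ _ h'.choose_spec h
  obtain ⟨Y, hAY, hY, hc⟩ := exists_closed_under κ hκ A hA (Set (K × K)) K
    (by rw [mk_set, mk_prod, lift_id, hK, mul_eq_self hκ]) hK.le op
  refine ⟨Y, hAY, hY, ?_⟩
  intro y hy
  by_contra hcon
  push Not at hcon
  have : ∀ k, ∃ a, a ∈ closure (B y k) ∧ a ∈ Y := by
    intro k
    have := hcon (B y k) (hB y k).1 (hB y k).2
    rw [Set.not_disjoint_iff] at this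
    exact this
  choose a ha haY using this
  apply hy
  rw [← hop {ij | a ij.2 ∈ closure (B y ij.1)} a y ⟨ha, rfl⟩]
  exact hc _ _ haY

/-- No free sequences of length `κ⁺`. -/
theorem no_free {X : Type u} [TopologicalSpace X] {κ : Cardinal.{u}} (hκ : ℵ₀ ≤ κ)
    (hADL : AlmostDiscretelyLindelof X) (hχ : HasCharacterLE X κ)
    (Λ : Type u) [LinearOrder Λ] [WellFoundedLT Λ]
    (hbd : ∀ S : Set Λ, #S ≤ κ → ∃ γ, ∀ s ∈ S, s < γ)
    (x : Λ → X) (hfree : ∀ γ, Disjoint (closure (x '' Iio γ)) (closure (x '' Ici γ))) :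
    False := by
  have hcount : ∀ S : Set Λ, S.Countable → ∃ γ, ∀ s ∈ S, s < γ := fun S hS =>
    hbd S ((le_aleph0_iff_set_countable.2 hS).trans hκ)
  let K := κ.out
  have hK : #K = κ := mk_out κ
  obtain ⟨B, hB, hbase⟩ := exists_base hχ K hK
  have hdisc : IsDiscreteSubset (range x) := by
    rintro _ ⟨γ, rfl⟩
    obtain ⟨δ, hδ, hmin⟩ : ∃ δ, γ < δ ∧ ∀ ε, γ < ε → δ ≤ ε := by
      obtain ⟨δ0, h0⟩ := hcount {γ} (countable_singleton γ)
      have hne : (Ioi γ).Nonempty := ⟨δ0, h0 γ rfl⟩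
      exact ⟨wellFounded_lt.min _ hne, wellFounded_lt.min_mem _ hne,
        fun ε hε => not_lt.1 (wellFounded_lt.not_lt_min _ hε)⟩
    refine ⟨(closure (x '' Iio γ))ᶜ ∩ (closure (x '' Ici δ))ᶜ,
      isClosed_closure.isOpen_compl.inter isClosed_closure.isOpen_compl, ?_⟩
    apply Subset.antisymm
    · rintro _ ⟨⟨h1, h2⟩, ε, rfl⟩
      rcases lt_trichotomy ε γ with h | h | h
      · exact (h1 (subset_closure ⟨ε, h, rfl⟩)).elim
      · rw [h]; rfl
      · exact (h2 (subset_closure ⟨ε, hmin ε h, rfl⟩)).elim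
    · rintro _ rfl
      refine ⟨⟨fun h => ?_, fun h => ?_⟩, γ, rfl⟩
      · exact (hfree γ).le_bot ⟨h, subset_closure ⟨γ, le_rfl, rfl⟩⟩
      · exact (hfree δ).le_bot ⟨subset_closure ⟨γ, hδ, rfl⟩, h⟩
  obtain ⟨L, hL, hxL⟩ := hADL _ hdisc
  have key : ∀ y : X, ∃ γ, y ∉ closure (x '' Ici γ) := by
    intro y
    by_contra hcon
    push Not at hcon
    obtain ⟨γ0, -⟩ := hcount ∅ countable_empty
    have : ∀ k, ∃ b, x b ∈ B y k := by
      intro k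
      obtain ⟨_, hz, b, -, rfl⟩ := mem_closure_iff.1 (hcon γ0) (B y k) (hB y k).1 (hB y k).2
      exact ⟨b, hz⟩
    choose b hb using this
    obtain ⟨γ, hγ⟩ := hbd (range b) (mk_range_le.trans hK.le)
    refine (hfree γ).le_bot ⟨?_, hcon γ⟩
    rw [mem_closure_iff_nhds]
    intro V hV
    obtain ⟨k, hk⟩ := hbase y V hV
    exact ⟨x (b k), hk (hb k), b k, hγ _ ⟨k, rfl⟩, rfl⟩
  choose g hg using key
  obtain ⟨t, ht, hcov⟩ := hL.elim_countable_subcover (fun y => (closure (x '' Ici (g y)))ᶜ)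
    (fun y => isClosed_closure.isOpen_compl) (fun y _ => mem_iUnion.2 ⟨y, hg y⟩)
  obtain ⟨δ, hδ⟩ := hcount (g '' t) (ht.image g)
  have := hcov (hxL ⟨δ, rfl⟩)
  simp only [mem_iUnion] at this
  obtain ⟨y, hy, h⟩ := this
  exact h (subset_closure ⟨δ, (hδ _ ⟨y, hy, rfl⟩).le, rfl⟩)

theorem exists_surj {I S : Type u} [Nonempty S] (h : #S ≤ #I) :
    ∃ f : I → S, Function.Surjective f := by
  obtain ⟨i⟩ := h
  exact ⟨_, Function.invFun_surjective i.injective⟩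

/-- The closing-off argument. -/
theorem closing_off {X : Type u} [TopologicalSpace X] {κ : Cardinal.{u}} (hκ : ℵ₀ ≤ κ)
    (hADL : AlmostDiscretelyLindelof X) (hχ : HasCharacterLE X κ)
    (H : ∀ A : Set X, #A ≤ κ → ∃ Y : Set X, A ⊆ Y ∧ #Y ≤ 2 ^ κ ∧ IsClosed Y ∧
      ∃ 𝒞 : Set (Set X), #𝒞 ≤ 2 ^ κ ∧ (∀ C ∈ 𝒞, IsClosed C ∧ Disjoint C Y) ∧
        ∀ p, p ∉ Y → ∃ C ∈ 𝒞, p ∈ C) : #X ≤ 2 ^ κ := by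
  classical
  rcases isEmpty_or_nonempty X with hX | ⟨⟨x0⟩⟩
  · simp
  let K := κ.out
  have hK : #K = κ := mk_out κ
  haveI : Nonempty K := by
    rw [← mk_ne_zero_iff, hK]
    exact (aleph0_pos.trans_le hκ).ne'
  let I := Set K
  have hI : #I = 2 ^ κ := by rw [mk_set, hK]
  have h2 : ℵ₀ ≤ (2 : Cardinal.{u}) ^ κ := hκ.trans (cantor κ).le
  have H' : ∀ F : K → X, ∃ (e : I → X) (C : I → Set X), (∀ i, IsClosed (C i)) ∧
      (∀ i, Disjoint (C i) (closure (range F))) ∧ ∀ p, (∃ i, e i = p) ∨ ∃ i, p ∈ C i := by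
    intro F
    obtain ⟨Y, hFY, hY, hYc, 𝒞, h𝒞, h1, hp⟩ := H (range F) (mk_range_le.trans hK.le)
    haveI : Nonempty Y := ⟨⟨F (Classical.arbitrary K), hFY ⟨_, rfl⟩⟩⟩
    obtain ⟨e, he⟩ := exists_surj (I := I) (S := Y) (by rw [hI]; exact hY)
    obtain ⟨c, hc⟩ := exists_surj (I := I) (S := (insert ∅ 𝒞 : Set (Set X))) (by
      rw [hI]
      exact (mk_insert_le).trans (add_le_of_le h2 h𝒞 (one_le_aleph0.trans h2)))
    have hcl : closure (range F) ⊆ Y := closure_minimal hFY hYc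
    refine ⟨fun i => (e i).1, fun i => (c i).1, ?_, ?_, ?_⟩
    · intro i
      rcases (c i).2 with h | h
      · beta_reduce; rw [h]; exact isClosed_empty
      · exact (h1 _ h).1
    · intro i
      rcases (c i).2 with h | h
      · beta_reduce; rw [h]; exact empty_disjoint _
      · exact (h1 _ h).2.mono_right hcl
    · intro p
      by_cases hpY : p ∈ Y
      · obtain ⟨i, hi⟩ := he ⟨p, hpY⟩
        exact Or.inl ⟨i, by beta_reduce; rw [hi]⟩
      · obtain ⟨C, hC, hpC⟩ := hp p hpY
        obtain ⟨i, hi⟩ := hc ⟨C, Or.inr hC⟩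
        exact Or.inr ⟨i, by beta_reduce; rw [hi]; exact hpC⟩
  choose e C hCc hCd hcov using H'
  let op : I ⊕ (K → I) → (K × K → X) → X := fun j f => match j with
    | Sum.inl i => e (fun k => f (k, k)) i
    | Sum.inr s => if h : ∃ z, ∀ γ, z ∈ C (fun k => f (γ, k)) (s γ) then h.choose else x0
  obtain ⟨Y, hx0, hY, hYop⟩ := exists_closed_under κ hκ {x0} (by simpa using one_le_aleph0.trans h2)
    (I ⊕ (K → I)) (K × K) (by
      rw [mk_sum, lift_id, lift_id, hI]
      refine add_le_of_le h2 le_rfl ?_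
      rw [← power_def, hI, hK, ← power_mul, mul_eq_self hκ])
    (by rw [mk_prod, lift_id, hK, mul_eq_self hκ]) op
  have hx0Y : x0 ∈ Y := hx0 rfl
  suffices hall : ∀ p, p ∈ Y by
    have : Y = Set.univ := eq_univ_of_forall hall
    rw [this, mk_univ] at hY
    exact hY
  by_contra hcon
  push Not at hcon
  obtain ⟨p, hp⟩ := hcon
  -- p lies in some closed piece for every F in Y
  have hpC : ∀ F : K → X, (∀ k, F k ∈ Y) → ∃ i, p ∈ C F i := by
    intro F hF
    rcases hcov F p with ⟨i, hi⟩ | h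
    · exfalso
      apply hp
      rw [← hi]
      exact hYop (Sum.inl i) (fun ab => F ab.1) (fun ab => hF ab.1)
    · exact h
  have hstep : ∀ (f : K → K → X) (s : K → I), (∀ γ k, f γ k ∈ Y) → (∀ γ, p ∈ C (f γ) (s γ)) →
      ∃ z ∈ Y, ∀ γ, z ∈ C (f γ) (s γ) := by
    intro f s hf hs
    have hex : ∃ z, ∀ γ, z ∈ C (f γ) (s γ) := ⟨p, hs⟩
    refine ⟨_, hYop (Sum.inr s) (fun ab => f ab.1 ab.2) (fun ab => hf ab.1 ab.2), ?_⟩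
    have : op (Sum.inr s) (fun ab => f ab.1 ab.2) = hex.choose := dif_pos hex
    rw [this]
    exact hex.choose_spec
  -- choose the piece
  have hsel : ∀ F : K → X, ∃ i, (∀ k, F k ∈ Y) → p ∈ C F i := by
    intro F
    by_cases hF : ∀ k, F k ∈ Y
    · obtain ⟨i, hi⟩ := hpC F hF
      exact ⟨i, fun _ => hi⟩
    · exact ⟨∅, fun h => (hF h).elim⟩
  choose sel hsel using hsel
  -- the index order
  let Λ := (Order.succ κ).ord.ToType
  have hΛ : #Λ = Order.succ κ := mk_ord_toType _
  have hIio : ∀ a : Λ, #(Iio a) ≤ κ := fun a => Order.lt_succ_iff.1 (mk_Iio_toType_ord_lt a)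
  have hbd : ∀ S : Set Λ, #S ≤ κ → ∃ γ, ∀ s ∈ S, s < γ := by
    intro S hS
    by_contra hcon
    push Not at hcon
    have hcv : (univ : Set Λ) ⊆ S ∪ ⋃ s ∈ S, Iio s := by
      intro γ _
      obtain ⟨s, hs, h⟩ := hcon γ
      rcases h.eq_or_lt with h | h
      · left; rw [h]; exact hs
      · right; exact mem_biUnion hs h
    have h1 : #(⋃ s ∈ S, Iio s) ≤ κ := by
      refine (mk_biUnion_le _ _).trans ?_
      exact (mul_le_mul' hS (ciSup_le' fun s => hIio _)).trans (mul_eq_self hκ).le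
    have h3 : #Λ ≤ κ := by
      rw [← mk_univ]
      exact (mk_le_mk_of_subset hcv).trans ((mk_union_le _ _).trans (add_le_of_le hκ hS h1))
    rw [hΛ] at h3
    exact (Order.lt_succ κ).not_ge h3
  have hOpt : ∀ a : Λ, ∃ f : K → Option (Iio a), Function.Surjective f := by
    intro a
    apply exists_surj
    rw [hK, mk_option]
    exact add_le_of_le hκ (hIio a) (one_le_aleph0.trans hκ)
  choose en hen using hOpt
  have hIic : ∀ a : Λ, ∃ f : K → Iic a, Function.Surjective f := by
    intro a
    haveI : Nonempty (Iic a) := ⟨⟨a, le_refl a⟩⟩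
    apply exists_surj
    rw [hK]
    have : Iic a ⊆ insert a (Iio a) := by
      intro b hb
      rcases (show b ≤ a from hb).eq_or_lt with h | h
      · exact Or.inl h
      · exact Or.inr h
    exact (mk_le_mk_of_subset this).trans (mk_insert_le.trans
      (add_le_of_le hκ (hIio a) (one_le_aleph0.trans hκ)))
  choose ei hei using hIic
  -- initial segment enumerations
  let Fseq : (Λ → X) → Λ → K → X := fun x γ k => match en γ k with
    | none => x0
    | some b => x b.1
  have hrec : ∃ x : Λ → X, ∀ a, x a ∈ Y ∧ ∀ γ ≤ a, x a ∈ C (Fseq x γ) (sel (Fseq x γ)) := by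
    let G : Set X → X := fun S => if h : S.Nonempty then h.some else x0
    let step : (a : Λ) → ((b : Λ) → b < a → X) → X := fun a ih =>
      let y : Λ → X := fun b => if h : b < a then ih b h else x0
      G {z | z ∈ Y ∧ ∀ γ ≤ a, z ∈ C (Fseq y γ) (sel (Fseq y γ))}
    let x : Λ → X := (wellFounded_lt (α := Λ)).fix step
    have hx : ∀ a, x a = step a (fun b _ => x b) := fun a => WellFounded.fix_eq _ _ _
    have hF : ∀ a, ∀ γ ≤ a, Fseq (fun b => if b < a then x b else x0) γ = Fseq x γ := by
      intro a γ hγ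
      funext k
      simp only [Fseq]
      rcases en γ k with _ | b
      · rfl
      · exact if_pos (lt_of_lt_of_le b.2 hγ)
    refine ⟨x, fun a => ?_⟩
    induction a using WellFoundedLT.induction with
    | _ a ih =>
    have hx' : x a = G {z | z ∈ Y ∧ ∀ γ ≤ a, z ∈ C (Fseq x γ) (sel (Fseq x γ))} := by
      rw [hx a]
      simp only [step, dite_eq_ite]
      congr 1
      ext z
      simp only [mem_ofPred_eq]
      refine and_congr_right fun _ => forall_congr' fun γ => forall_congr' fun hγ => ?_
      rw [hF a γ hγ]
    have hne : {z | z ∈ Y ∧ ∀ γ ≤ a, z ∈ C (Fseq x γ) (sel (Fseq x γ))}.Nonempty := by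
      have hFY : ∀ γ ≤ a, ∀ k, Fseq x γ k ∈ Y := by
        intro γ hγ k
        simp only [Fseq]
        rcases en γ k with _ | b
        · exact hx0Y
        · exact (ih b.1 (lt_of_lt_of_le b.2 hγ)).1
      obtain ⟨z, hz, hzC⟩ := hstep (fun k => Fseq x (ei a k).1)
        (fun k => sel (Fseq x (ei a k).1)) (fun k => hFY _ (ei a k).2)
        (fun k => hsel _ (hFY _ (ei a k).2))
      refine ⟨z, hz, fun γ hγ => ?_⟩
      obtain ⟨k, hk⟩ := hei a ⟨γ, hγ⟩
      have := hzC k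
      simp only [hk] at this
      exact this
    have : x a = hne.some := by rw [hx']; exact dif_pos hne
    rw [this]
    exact hne.some_mem
  obtain ⟨x, hx⟩ := hrec
  refine no_free hκ hADL hχ Λ hbd x fun γ => ?_
  have h1 : closure (x '' Ici γ) ⊆ C (Fseq x γ) (sel (Fseq x γ)) := by
    apply closure_minimal _ (hCc _ _)
    rintro _ ⟨a, ha, rfl⟩
    exact (hx a).2 γ ha
  have h3 : closure (x '' Iio γ) ⊆ closure (range (Fseq x γ)) := by
    apply closure_mono
    rintro _ ⟨b, hb, rfl⟩
    obtain ⟨k, hk⟩ := hen γ (some ⟨b, hb⟩)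
    exact ⟨k, by simp only [Fseq, hk]⟩
  exact ((hCd _ _).mono h1 h3).symm

theorem isClosed_of_theta {X : Type u} [TopologicalSpace X] {Y : Set X}
    (h : ∀ y, y ∉ Y → ∃ U, IsOpen U ∧ y ∈ U ∧ Disjoint (closure U) Y) : IsClosed Y := by
  rw [← isOpen_compl_iff, isOpen_iff_mem_nhds]
  intro y hy
  obtain ⟨U, hU, hyU, hd⟩ := h y hy
  exact Filter.mem_of_superset (hU.mem_nhds hyU)
    (fun z hz hzY => hd.le_bot ⟨subset_closure hz, hzY⟩)

/-- Arhangelskii's theorem (Urysohn case). -/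
theorem lindelof_card {X : Type u} [TopologicalSpace X] [T25Space X] [LindelofSpace X]
    {κ : Cardinal.{u}} (hκ : ℵ₀ ≤ κ) (hχ : HasCharacterLE X κ) : #X ≤ 2 ^ κ := by
  have h2 : ℵ₀ ≤ (2 : Cardinal.{u}) ^ κ := hκ.trans (cantor κ).le
  refine closing_off hκ (fun D _ => ⟨univ, isLindelof_univ, subset_univ D⟩) hχ ?_
  intro A hA
  obtain ⟨Y, hAY, hY, hth⟩ := exists_theta_hull hκ hχ A (hA.trans (cantor κ).le)
  have hYc := isClosed_of_theta hth
  refine ⟨Y, hAY, hY, hYc, ?_⟩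
  let K := κ.out
  have hK : #K = κ := mk_out κ
  obtain ⟨B, hB, hbase⟩ := exists_base hχ K hK
  let V : (ULift.{u} ℕ → Option (Y × K)) → Set X := fun s =>
    ⋃ n, ⋃ q ∈ s n, B (q.1 : X) q.2
  refine ⟨{D | IsClosed D ∧ Disjoint D Y} ∩ range (fun s => (V s)ᶜ), ?_, ?_, ?_⟩
  · refine (mk_le_mk_of_subset inter_subset_right).trans (mk_range_le.trans ?_)
    rw [← power_def, mk_option, mk_prod, lift_id, lift_id, mk_uLift, mk_nat, lift_aleph0, hK]
    have : #Y * κ + 1 ≤ 2 ^ κ := by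
      refine add_le_of_le h2 ?_ (one_le_aleph0.trans h2)
      exact (mul_le_mul' hY (cantor κ).le).trans (mul_eq_self h2).le
    refine (power_le_power_right this).trans ?_
    rw [← power_mul]
    apply power_le_power_left two_ne_zero
    exact (mul_le_mul' le_rfl hκ).trans (mul_eq_self hκ).le
  · intro D hD
    exact hD.1
  · intro p hp
    have : ∀ y : Y, ∃ k, B (y : X) k ⊆ {p}ᶜ := fun y =>
      hbase y _ (isOpen_compl_singleton.mem_nhds (fun h => hp (h ▸ y.2)))
    choose k hk using this
    obtain ⟨t, ht, hcov⟩ := hYc.isLindelof.elim_countable_subcover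
      (fun y : Y => B (y : X) (k y)) (fun y => (hB _ _).1)
      (fun y hy => mem_iUnion.2 ⟨⟨y, hy⟩, (hB _ _).2⟩)
    obtain ⟨f, hf⟩ : ∃ f : ℕ → Option (Y × K),
        ∀ q, (∃ n, q ∈ f n) ↔ ∃ y ∈ t, q = (y, k y) := by
      haveI := ht.to_subtype
      obtain ⟨_⟩ := nonempty_encodable t
      refine ⟨fun n => (Encodable.decode₂ t n).map (fun y => (y.1, k y.1)), fun q => ?_⟩
      constructor
      · rintro ⟨n, hn⟩
        rw [Option.mem_map] at hn
        obtain ⟨y, -, rfl⟩ := hn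
        exact ⟨y.1, y.2, rfl⟩
      · rintro ⟨y, hy, rfl⟩
        exact ⟨Encodable.encode (⟨y, hy⟩ : t), by simp [Encodable.encodek₂]⟩
    have hVo : IsOpen (V fun n => f n.down) :=
      isOpen_iUnion fun n => isOpen_biUnion fun q _ => (hB _ _).1
    refine ⟨(V fun n => f n.down)ᶜ, ⟨⟨hVo.isClosed_compl, ?_⟩, _, rfl⟩, ?_⟩
    · rw [disjoint_compl_left_iff_subset]
      intro y hy
      have := hcov hy
      simp only [mem_iUnion] at this
      obtain ⟨z, hz, hyz⟩ := this
      obtain ⟨n, hn⟩ := (hf _).2 ⟨z, hz, rfl⟩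
      exact mem_iUnion.2 ⟨⟨n⟩, mem_biUnion (show (z, k z) ∈ {q | q ∈ f n} from hn) hyz⟩
    · intro hpV
      simp only [V, mem_iUnion] at hpV
      obtain ⟨n, q, hq, hpq⟩ := hpV
      obtain ⟨y, -, rfl⟩ := (hf q).1 ⟨_, hq⟩
      exact hk y hpq rfl

/-- Šapirovskiĭ's lemma. -/
theorem shapirovskii {X : Type u} [TopologicalSpace X] (Z : Set X) (U : X → Set X)
    (hU : ∀ z ∈ Z, IsOpen (U z) ∧ z ∈ U z) :
    ∃ D ⊆ Z, IsDiscreteSubset D ∧ ∀ z ∈ Z, z ∈ closure D ∨ ∃ d ∈ D, z ∈ U d := by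
  obtain ⟨r, hr⟩ : ∃ r : X → X → Prop, IsWellOrder X r := ⟨WellOrderingRel, inferInstance⟩
  have hwf : WellFounded r := hr.toIsWellFounded.wf
  let step : (a : X) → ((b : X) → r b a → Prop) → Prop := fun a ih =>
    a ∈ Z ∧ a ∉ closure {b | ∃ h : r b a, ih b h} ∧ ∀ b, ∀ h : r b a, ih b h → a ∉ U b
  let P : X → Prop := hwf.fix step
  have hP : ∀ a, P a ↔ (a ∈ Z ∧ a ∉ closure {b | r b a ∧ P b} ∧
      ∀ b, r b a → P b → a ∉ U b) := by
    intro a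
    have : P a = step a (fun b _ => P b) := WellFounded.fix_eq _ _ _
    rw [this]
    simp only [step, exists_prop]
  refine ⟨{a | P a}, fun a ha => ((hP a).1 ha).1, ?_, ?_⟩
  · intro a ha
    have ha' := (hP a).1 ha
    refine ⟨U a ∩ (closure {b | r b a ∧ P b})ᶜ,
      (hU a ha'.1).1.inter isClosed_closure.isOpen_compl, ?_⟩
    apply Subset.antisymm
    · rintro b ⟨⟨h1, h2⟩, hb⟩
      rcases trichotomous_of r b a with h | h | h
      · exact (h2 (subset_closure ⟨h, hb⟩)).elim
      · exact h
      · exact (((hP b).1 hb).2.2 a h ha h1).elim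
    · rintro _ rfl
      exact ⟨⟨(hU _ ha'.1).2, ha'.2.1⟩, ha⟩
  · intro z hz
    by_contra hcon
    push Not at hcon
    have : P z := (hP z).2 ⟨hz, fun h => hcon.1 (closure_mono (fun b hb => hb.2) h),
      fun b _ hb => hcon.2 b hb⟩
    exact hcon.1 (subset_closure this)

theorem HasCharacterLE.subtype {X : Type u} [TopologicalSpace X] {κ : Cardinal.{u}}
    (hχ : HasCharacterLE X κ) (L : Set X) : HasCharacterLE L κ := by
  intro x
  obtain ⟨B, hB, h1, h2⟩ := hχ x
  refine ⟨(fun U => (Subtype.val ⁻¹' U : Set L)) '' B, mk_image_le.trans hB, ?_, ?_⟩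
  · rintro _ ⟨U, hU, rfl⟩
    exact ⟨(h1 U hU).1.preimage continuous_subtype_val, (h1 U hU).2⟩
  · intro V hV
    rw [nhds_subtype_eq_comap] at hV
    obtain ⟨W, hW, hWV⟩ := hV
    obtain ⟨U, hU, hUW⟩ := h2 W hW
    exact ⟨_, ⟨U, hU, rfl⟩, fun y hy => hWV (hUW hy)⟩

/-- a Urysohn almost discretely Lindelöf space of character at most
`κ` has cardinality at most `2^κ` (in particular, first-countable such spaces have
cardinality at most the continuum). -/
theorem stmt5 {X : Type u} [TopologicalSpace X] [T25Space X]
    (hADL : AlmostDiscretelyLindelof X) (κ : Cardinal.{u}) (hκ : ℵ₀ ≤ κ)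
    (hχ : HasCharacterLE X κ) : #X ≤ 2 ^ κ := by
  classical
  have h2 : ℵ₀ ≤ (2 : Cardinal.{u}) ^ κ := hκ.trans (cantor κ).le
  have hspread : ∀ D : Set X, IsDiscreteSubset D → #D ≤ 2 ^ κ := by
    intro D hD
    obtain ⟨L, hL, hDL⟩ := hADL D hD
    haveI : LindelofSpace L := isLindelof_iff_lindelofSpace.1 hL
    exact (mk_le_mk_of_subset hDL).trans (lindelof_card hκ (hχ.subtype L))
  refine closing_off hκ hADL hχ ?_
  intro A hA
  obtain ⟨Y, hAY, hY, hth⟩ := exists_theta_hull hκ hχ A (hA.trans (cantor κ).le)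
  refine ⟨Y, hAY, hY, isClosed_of_theta hth, ?_⟩
  have hth' : ∀ y, ∃ U : Set X, y ∉ Y → IsOpen U ∧ y ∈ U ∧ Disjoint (closure U) Y := by
    intro y
    by_cases hy : y ∈ Y
    · exact ⟨∅, fun h => (h hy).elim⟩
    · obtain ⟨U, hU⟩ := hth y hy
      exact ⟨U, fun _ => hU⟩
  choose U hU using hth'
  obtain ⟨D, hDY, hD, hcov⟩ := shapirovskii Yᶜ U (fun z hz => ⟨(hU z hz).1, (hU z hz).2.1⟩)
  obtain ⟨E, hDE, hE, hEth⟩ := exists_theta_hull hκ hχ D (hspread D hD)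
  have hclE : closure D ⊆ E := closure_minimal hDE (isClosed_of_theta hEth)
  refine ⟨(fun d => closure (U d)) '' D ∪ (fun z => ({z} : Set X)) '' (E ∩ Yᶜ), ?_, ?_, ?_⟩
  · refine (mk_union_le _ _).trans (add_le_of_le h2 ?_ ?_)
    · exact mk_image_le.trans (hspread D hD)
    · exact mk_image_le.trans ((mk_le_mk_of_subset inter_subset_left).trans hE)
  · rintro C (⟨d, hd, rfl⟩ | ⟨z, hz, rfl⟩)
    · exact ⟨isClosed_closure, (hU d (hDY hd)).2.2⟩
    · exact ⟨isClosed_singleton, disjoint_singleton_left.2 hz.2⟩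
  · intro p hp
    rcases hcov p hp with h | ⟨d, hd, h⟩
    · exact ⟨{p}, Or.inr ⟨p, ⟨hclE h, hp⟩, rfl⟩, rfl⟩
    · exact ⟨_, Or.inl ⟨d, hd, rfl⟩, subset_closure h⟩
end

section
/- Assume 2^{<𝔠} = 𝔠. Let X be an almost discretely Lindelöf Hausdorff space with countable tightness and countable closed pseudocharacter (ψ_c(X) = ω). Then |X| ≤ 𝔠. -/
open Cardinal Set Topology

universe u

/-- Well-founded recursion, packaged as an existence statement. -/
lemma exists_rec_aux {I : Type u} [LinearOrder I] [WellFoundedLT I] {α : Type u}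
    (F : (i : I) → (Iio i → α) → α) : ∃ f : I → α, ∀ i, f i = F i (fun j => f j) := by
  refine ⟨(wellFounded_lt (α := I)).fix (fun i rec => F i (fun j => rec j.1 j.2)), fun i => ?_⟩
  rw [WellFounded.fix_eq]

lemma cpow_aux (hch : ∀ κ : Cardinal.{u}, κ < Cardinal.continuum → 2 ^ κ ≤ Cardinal.continuum)
    (κ : Cardinal.{u}) (hκ : κ < continuum) : continuum ^ κ ≤ continuum.{u} := by
  rw [← two_power_aleph0, ← power_mul, two_power_aleph0]
  refine hch _ ?_
  exact mul_lt_of_lt aleph0_le_continuum aleph0_lt_continuum hκ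

lemma bdd_aux (hch : ∀ κ : Cardinal.{u}, κ < Cardinal.continuum → 2 ^ κ ≤ Cardinal.continuum)
    (s : Set (continuum.{u}).ord.ToType) (hs : #s < continuum) : ∃ j, ∀ i ∈ s, i < j := by
  have hcof : continuum.{u} ≤ (continuum.{u}).ord.cof := by
    by_contra h
    exact absurd (lt_power_cof_ord aleph0_le_continuum.{u}) (not_lt.2 (cpow_aux hch _ (not_le.1 h)))
  have : ¬ IsCofinal s := fun h => by
    have h1 := Order.cof_le h
    rw [Ordinal.cof_toType] at h1
    exact absurd (hcof.trans h1) (not_le.2 hs)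
  unfold IsCofinal at this
  push Not at this
  exact this

lemma mk_iUnion_aux {α ι : Type u} (f : ι → Set α) (hι : #ι ≤ continuum)
    (hf : ∀ i, #(f i) ≤ continuum) : #(⋃ i, f i) ≤ continuum := by
  refine (mk_iUnion_le f).trans ?_
  calc _ ≤ continuum.{u} * continuum.{u} := mul_le_mul' hι (ciSup_le' hf)
    _ = _ := continuum_mul_self

/-- Number of small subsets. -/
lemma small_subsets_aux
    (hch : ∀ κ : Cardinal.{u}, κ < Cardinal.continuum → 2 ^ κ ≤ Cardinal.continuum)
    {X : Type u} (W : Set X) (hW : #W ≤ continuum) :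
    #{S : Set X | S ⊆ W ∧ #S < continuum} ≤ continuum := by
  let I := (continuum.{u}).ord.ToType
  have hsub : {S : Set X | S ⊆ W ∧ #S < continuum} ⊆
      ⋃ i : I, {S : Set X | S ⊆ W ∧ #S ≤ #(Iio i)} := by
    rintro S ⟨hSW, hS⟩
    have h1 : #S ≤ #I := by rw [mk_ord_toType]; exact hS.le
    obtain ⟨f⟩ := h1
    have hr : #(range f) = #S := mk_range_eq f f.injective
    obtain ⟨j, hj⟩ := bdd_aux hch (range f) (hr ▸ hS)
    refine mem_iUnion.2 ⟨j, hSW, ?_⟩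
    rw [← hr]
    exact mk_le_mk_of_subset hj
  refine (mk_le_mk_of_subset hsub).trans (mk_iUnion_aux _ (mk_ord_toType _).le fun i => ?_)
  refine (mk_bounded_subset_le W _).trans ?_
  have hi : #(Iio i) < continuum := mk_Iio_toType_ord_lt i
  exact (power_le_power_right (max_le hW aleph0_le_continuum)).trans (cpow_aux hch _ hi)

/-- Closing off under a set-valued operation on small sets. -/
lemma closing_off_aux
    (hch : ∀ κ : Cardinal.{u}, κ < Cardinal.continuum → 2 ^ κ ≤ Cardinal.continuum)
    {X : Type u} (G : Set X → Set X) (hG : ∀ S : Set X, #S < continuum → #(G S) ≤ continuum) :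
    ∃ Y : Set X, #Y ≤ continuum ∧ ∀ S ⊆ Y, #S < continuum → G S ⊆ Y := by
  let I := (continuum.{u}).ord.ToType
  have hI : #I = continuum := mk_ord_toType _
  obtain ⟨f, hf⟩ := exists_rec_aux (I := I) (α := Set X)
    (fun i r => ⋃ S : {S : Set X | S ⊆ (⋃ j, r j) ∧ #S < continuum}, G S.1)
  have hcard : ∀ i, #(f i) ≤ continuum := by
    intro i
    induction i using WellFoundedLT.induction with
    | ind i ih =>
      rw [hf i]
      refine mk_iUnion_aux _ (small_subsets_aux hch _ ?_) fun S => hG _ S.2.2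
      exact mk_iUnion_aux _ (mk_Iio_toType_ord_lt i).le fun j => ih j.1 j.2
  refine ⟨⋃ i, f i, mk_iUnion_aux _ hI.le hcard, fun S hS hSc => ?_⟩
  have h1 : ∀ s : S, ∃ i, s.1 ∈ f i := fun s => mem_iUnion.1 (hS s.2)
  choose g hg using h1
  obtain ⟨j, hj⟩ := bdd_aux hch (range g) (mk_range_le.trans_lt hSc)
  refine subset_trans ?_ (subset_iUnion f j)
  rw [hf j]
  refine subset_iUnion_of_subset ⟨S, fun s hs => ?_, hSc⟩ subset_rfl
  exact mem_iUnion.2 ⟨⟨g ⟨s, hs⟩, hj _ (mem_range_self _)⟩, hg ⟨s, hs⟩⟩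

lemma closure_card_aux {X : Type u} [TopologicalSpace X]
    (ht : ∀ (A : Set X) (x : X), x ∈ closure A →
      ∃ B ⊆ A, B.Countable ∧ x ∈ closure B)
    (hψc : ∀ x : X, ∃ U : ℕ → Set X, (∀ n, IsOpen (U n) ∧ x ∈ U n) ∧
      (⋂ n, closure (U n)) = {x}) (S : Set X) (hS : #S ≤ continuum) :
    #(closure S) ≤ continuum := by
  have key : ∀ x : closure S, ∃ f : ℕ → ℕ → S,
      (⋂ n, closure (range fun m => (f n m : X))) = {x.1} := by
    rintro ⟨x, hx⟩
    obtain ⟨U, hU, hUx⟩ := hψc x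
    have h1 : ∀ n, ∃ g : ℕ → S, (∀ m, (g m : X) ∈ U n) ∧ x ∈ closure (range fun m => (g m : X)) := by
      intro n
      have hx' : x ∈ closure (S ∩ U n) := by
        rw [mem_closure_iff] at hx ⊢
        intro o ho hxo
        obtain ⟨z, hz, hzS⟩ := hx (o ∩ U n) (ho.inter (hU n).1) ⟨hxo, (hU n).2⟩
        exact ⟨z, hz.1, hzS, hz.2⟩
      obtain ⟨B, hB, hBc, hxB⟩ := ht _ _ hx'
      have hne : B.Nonempty := closure_nonempty_iff.1 ⟨x, hxB⟩
      obtain ⟨b, rfl⟩ := hBc.exists_eq_range hne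
      exact ⟨fun m => ⟨b m, (hB (mem_range_self m)).1⟩, fun m => (hB (mem_range_self m)).2, hxB⟩
    choose f hf hfx using h1
    refine ⟨f, Subset.antisymm ?_ ?_⟩
    · rw [← hUx]
      refine iInter_mono fun n => closure_mono ?_
      rintro _ ⟨m, rfl⟩
      exact hf n m
    · rintro _ rfl
      exact mem_iInter.2 hfx
  choose f hf using key
  have hinj : Function.Injective f := fun a b hab => by
    have h := hf a
    rw [hab, hf b] at h
    exact Subtype.ext (singleton_injective h).symm
  refine (mk_le_of_injective hinj).trans ?_
  have h2 : #(ℕ → ℕ → S) = ((#S) ^ ℵ₀) ^ ℵ₀ := by simp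
  rw [h2]
  calc _ ≤ ((continuum.{u}) ^ ℵ₀) ^ ℵ₀ := power_le_power_right (power_le_power_right hS)
    _ = _ := by simp

/-- (2^{<𝔠} = 𝔠) an almost discretely Lindelöf Hausdorff space with
countable tightness and countable closed pseudocharacter has cardinality at most `𝔠`. -/
theorem stmt7 {X : Type u} [TopologicalSpace X] [T2Space X]
    (hch : ∀ κ : Cardinal.{u}, κ < Cardinal.continuum → 2 ^ κ ≤ Cardinal.continuum)
    (hADL : AlmostDiscretelyLindelof X)
    (ht : ∀ (A : Set X) (x : X), x ∈ closure A →
      ∃ B ⊆ A, B.Countable ∧ x ∈ closure B)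
    (hψc : ∀ x : X, ∃ U : ℕ → Set X, (∀ n, IsOpen (U n) ∧ x ∈ U n) ∧
      (⋂ n, closure (U n)) = {x}) :
    #X ≤ Cardinal.continuum := by
  classical
  choose U hU hUx using hψc
  let I := (continuum.{u}).ord.ToType
  have hI : #I = continuum := mk_ord_toType _
  -- choice of points outside small unions
  have hh : ∀ (S : Set X) (n : S → ℕ), ∃ q : Set X, #q ≤ continuum ∧
      ((∃ z, z ∉ closure S ∧ ∀ s : S, z ∉ U s (n s)) →
        ∃ z ∈ q, z ∉ closure S ∧ ∀ s : S, z ∉ U s (n s)) := by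
    intro S n
    by_cases h : ∃ z, z ∉ closure S ∧ ∀ s : S, z ∉ U s (n s)
    · obtain ⟨z, hz⟩ := h
      refine ⟨{z}, ?_, fun _ => ⟨z, rfl, hz⟩⟩
      rw [mk_singleton]
      exact one_le_aleph0.trans aleph0_le_continuum
    · exact ⟨∅, by simp, fun h' => absurd h' h⟩
  choose q hq hqz using hh
  obtain ⟨Y, hYc, hY⟩ := closing_off_aux hch
    (fun S => closure S ∪ ⋃ n : S → ℕ, q S n) (by
      intro S hS
      refine (mk_union_le _ _).trans ?_
      rw [← continuum_add_self]
      refine add_le_add (closure_card_aux ht (fun x => ⟨U x, hU x, hUx x⟩) S hS.le)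
        (mk_iUnion_aux _ ?_ (hq S))
      have h2 : #(S → ℕ) = ℵ₀ ^ #S := by simp
      rw [h2]
      exact (power_le_power_right aleph0_le_continuum).trans (cpow_aux hch _ hS))
  have hYcl : closure Y ⊆ Y := by
    intro x hx
    obtain ⟨B, hB, hBc, hxB⟩ := ht _ _ hx
    exact hY B hB ((mk_le_aleph0_iff.2 hBc.to_subtype).trans_lt aleph0_lt_continuum) (Or.inl hxB)
  by_cases hall : ∀ p, p ∈ Y
  · have : Y = Set.univ := eq_univ_of_forall hall
    rw [this, mk_univ] at hYc
    exact hYc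
  exfalso
  push Not at hall
  obtain ⟨p, hp⟩ := hall
  have hn : ∀ x : X, ∃ n, x ∈ Y → p ∉ U x n := by
    intro x
    by_contra! h
    have hpx : p ∈ ⋂ n, closure (U x n) := mem_iInter.2 fun n => subset_closure (h n).2
    rw [hUx] at hpx
    exact hp (hpx ▸ (h 0).1)
  choose n hn using hn
  have hk : ∀ S : Set X, ∃ z, S ⊆ Y → #S < continuum →
      z ∈ Y ∧ z ∉ closure S ∧ ∀ s ∈ S, z ∉ U s (n s) := by
    intro S
    by_cases hS : S ⊆ Y ∧ #S < continuum
    · obtain ⟨z, hzq, hz1, hz2⟩ := hqz S (fun s => n s)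
        ⟨p, fun h => hp (hYcl (closure_mono hS.1 h)), fun s => hn _ (hS.1 s.2)⟩
      refine ⟨z, fun _ _ => ⟨hY S hS.1 hS.2 (Or.inr (mem_iUnion.2 ⟨_, hzq⟩)), hz1,
        fun s hs => hz2 ⟨s, hs⟩⟩⟩
    · exact ⟨p, fun h1 h2 => absurd ⟨h1, h2⟩ hS⟩
  choose k hk using hk
  have hYne : Nonempty Y := by
    obtain ⟨h, -⟩ := hk ∅ (empty_subset _) (by simpa using continuum_pos)
    exact ⟨⟨_, h⟩⟩
  obtain ⟨y, hy⟩ : ∃ y : I → Y, Function.Surjective y := by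
    have h1 : #Y ≤ #I := by rw [hI]; exact hYc
    obtain ⟨e⟩ := h1
    exact ⟨Function.invFun e, Function.invFun_surjective e.injective⟩
  obtain ⟨x, hx⟩ := exists_rec_aux (I := I) (α := X)
    (fun i r => k (range r ∪ range (fun j : Iio i => (y j : X))))
  let T : I → Set X := fun i => range (fun j : Iio i => x j) ∪ range (fun j : Iio i => (y j : X))
  have hTc : ∀ i, #(T i) < continuum := by
    intro i
    have hi : #(Iio i) < continuum := mk_Iio_toType_ord_lt i
    refine (mk_union_le _ _).trans_lt (add_lt_of_lt aleph0_le_continuum ?_ ?_)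
    · exact mk_range_le.trans_lt hi
    · exact mk_range_le.trans_lt hi
  have hxY : ∀ i, x i ∈ Y := by
    intro i
    induction i using WellFoundedLT.induction with
    | ind i ih =>
      rw [hx i]
      refine (hk (T i) ?_ (hTc i)).1
      rintro _ (⟨j, rfl⟩ | ⟨j, rfl⟩)
      · exact ih j.1 j.2
      · exact (y j).2
  have hTY : ∀ i, T i ⊆ Y := by
    rintro i _ (⟨j, rfl⟩ | ⟨j, rfl⟩)
    · exact hxY j
    · exact (y j).2
  have hxcl : ∀ i, x i ∉ closure (T i) := fun i => by
    rw [hx i]; exact (hk (T i) (hTY i) (hTc i)).2.1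
  have hxU : ∀ i, ∀ s ∈ T i, x i ∉ U s (n s) := fun i => by
    rw [hx i]; exact (hk (T i) (hTY i) (hTc i)).2.2
  have hxT : ∀ i j, j < i → x j ∈ T i := fun i j h => Or.inl ⟨⟨j, h⟩, rfl⟩
  have hyT : ∀ i j, j < i → (y j : X) ∈ T i := fun i j h => Or.inr ⟨⟨j, h⟩, rfl⟩
  have hD : IsDiscreteSubset (range x) := by
    rintro _ ⟨i, rfl⟩
    refine ⟨U (x i) (n (x i)) ∩ (closure (T i))ᶜ,
      (hU _ _).1.inter isClosed_closure.isOpen_compl, Subset.antisymm ?_ ?_⟩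
    · rintro _ ⟨⟨h1, h2⟩, j, rfl⟩
      rcases lt_trichotomy j i with h | h | h
      · exact absurd (subset_closure (hxT i j h)) h2
      · rw [h]; rfl
      · exact absurd h1 (hxU j _ (hxT j i h))
    · rintro _ rfl
      exact ⟨⟨(hU _ _).2, hxcl i⟩, mem_range_self i⟩
  obtain ⟨L, hL, hDL⟩ := hADL _ hD
  have hL' : IsLindelof (L ∩ closure (range x)) := hL.inter_right isClosed_closure
  obtain ⟨r, hrc, hr⟩ := hL'.elim_countable_subcover
    (fun i : I => U (y i) (n (y i))) (fun i => (hU _ _).1) (by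
      rintro z ⟨-, hz⟩
      have hzY : z ∈ Y := hYcl (closure_mono (range_subset_iff.2 hxY) hz)
      obtain ⟨i, hi⟩ := hy ⟨z, hzY⟩
      refine mem_iUnion.2 ⟨i, ?_⟩
      rw [hi]
      exact (hU _ _).2)
  obtain ⟨j, hj⟩ := bdd_aux hch r
    ((mk_le_aleph0_iff.2 hrc.to_subtype).trans_lt aleph0_lt_continuum)
  have h1 := hr ⟨hDL (mem_range_self j), subset_closure (mem_range_self j)⟩
  simp only [mem_iUnion] at h1
  obtain ⟨i, hi, hxi⟩ := h1
  exact hxU j _ (hyT j i (hj i hi)) hxi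
end

section
/- Let X be a topological space with F_θ(X) = κ, and suppose some cardinal λ with κ < λ ≤ (2^κ)^+ is a caliber of X. Then the θ-density of X is at most 2^κ, i.e., there is a set A ⊆ X with |A| ≤ 2^κ and [A]_θ = X. -/
open Cardinal Set Topology

universe u

lemma thetaCl_mono {X : Type u} [TopologicalSpace X] {A B : Set X} (h : A ⊆ B) :
    thetaCl A ⊆ thetaCl B := fun x hx U hU hxU =>
  (hx U hU hxU).mono (inter_subset_inter_right _ h)

lemma subset_thetaClosure {X : Type u} [TopologicalSpace X] (A : Set X) :
    A ⊆ thetaClosure A := fun _ hx _ hB => hB.1 hx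

lemma thetaClosure_mono {X : Type u} [TopologicalSpace X] {A B : Set X} (h : A ⊆ B) :
    thetaClosure A ⊆ thetaClosure B := fun _ hx _ hC => hx _ ⟨h.trans hC.1, hC.2⟩

lemma thetaCl_thetaClosure {X : Type u} [TopologicalSpace X] (A : Set X) :
    thetaCl (thetaClosure A) ⊆ thetaClosure A := by
  intro x hx B hB
  have h : thetaClosure A ⊆ B := fun y hy => hy B hB
  have := thetaCl_mono h hx
  rwa [hB.2] at this

lemma exists_open_of_thetaClosure_ne {X : Type u} [TopologicalSpace X] {A : Set X}
    (h : thetaClosure A ≠ Set.univ) :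
    ∃ U : Set X, IsOpen U ∧ U.Nonempty ∧ closure U ∩ thetaClosure A = ∅ := by
  obtain ⟨x, hx⟩ := (Set.ne_univ_iff_exists_notMem _).1 h
  have hx' : x ∉ thetaCl (thetaClosure A) := fun h => hx (thetaCl_thetaClosure A h)
  simp only [thetaCl, mem_setOf_eq, not_forall] at hx'
  obtain ⟨U, hU, hxU, hn⟩ := hx'
  exact ⟨U, hU, ⟨x, hxU⟩, Set.not_nonempty_iff_eq_empty.1 hn⟩

lemma exists_rec_image {ι : Type u} [LinearOrder ι] [WellFoundedLT ι] {Y : Type u}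
    (G : Set Y → Y) : ∃ U : ι → Y, ∀ i, U i = G (U '' Iio i) := by
  let U : ι → Y := (wellFounded_lt (α := ι)).fix
    (fun i ih => G {y | ∃ j, ∃ h : j < i, ih j h = y})
  refine ⟨U, fun i => ?_⟩
  have := (wellFounded_lt (α := ι)).fix_eq
    (fun i (ih : ∀ j, j < i → Y) => G {y | ∃ j, ∃ h : j < i, ih j h = y}) i
  refine this.trans (congrArg G ?_)
  ext y
  simp [U]

lemma exists_large_initial {ι : Type u} [LinearOrder ι] [WellFoundedLT ι] {κ : Cardinal.{u}}
    (hκ : ℵ₀ ≤ κ) (S : Set ι) (hS : κ < #S) :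
    κ < #{a : ι | a ∈ S ∧ #(S ∩ Iic a : Set ι) ≤ κ} := by
  by_contra! hJ
  set J : Set ι := {a : ι | a ∈ S ∧ #(S ∩ Iic a : Set ι) ≤ κ} with hJdef
  have hne : (S \ J).Nonempty := by
    by_contra hn
    rw [Set.not_nonempty_iff_eq_empty, Set.diff_eq_empty] at hn
    exact absurd ((mk_le_mk_of_subset hn).trans hJ) (not_le.2 hS)
  obtain ⟨a, ⟨haS, haJ⟩, hmin⟩ := (wellFounded_lt (α := ι)).has_min _ hne
  apply haJ
  refine ⟨haS, ?_⟩
  have hsub : (S ∩ Iic a : Set ι) ⊆ insert a J := by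
    rintro b ⟨hbS, hba⟩
    rcases eq_or_lt_of_le (show b ≤ a from hba) with rfl | hlt
    · exact Or.inl rfl
    · right
      by_contra hbJ
      exact hmin b ⟨hbS, hbJ⟩ hlt
  calc #(S ∩ Iic a : Set ι) ≤ #(insert a J : Set ι) := mk_le_mk_of_subset hsub
    _ ≤ #J + 1 := mk_insert_le
    _ ≤ κ + 1 := by gcongr
    _ = κ := add_one_eq hκ

/-- if every θ-free sequence in `X` has length at most `κ` and some
cardinal `λ` with `κ < λ ≤ (2^κ)⁺` is a caliber of `X`, then `X` has a θ-dense
subset of size at most `2^κ`, i.e. `θd(X) ≤ 2^κ`. -/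
theorem stmt14 {X : Type u} [TopologicalSpace X] (κ : Cardinal.{u}) (hκ : ℵ₀ ≤ κ)
    (hF : ∀ (ι : Type u) [LinearOrder ι] [WellFoundedLT ι] (f : ι → X),
      IsThetaFreeSeq f → #ι ≤ κ)
    (lam : Cardinal.{u}) (h1 : κ < lam) (h2 : lam ≤ Order.succ (2 ^ κ))
    (hcal : IsCaliber X lam) :
    ∃ A : Set X, #A ≤ 2 ^ κ ∧ thetaClosure A = Set.univ := by
  classical
  by_contra! hno
  have hX : Nonempty X := by
    by_contra hX
    rw [not_nonempty_iff] at hX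
    exact hno ∅ (by simp) (Subsingleton.elim _ _)
  have hκ2 : κ ≤ 2 ^ κ := (cantor κ).le
  have h2inf : ℵ₀ ≤ 2 ^ κ := hκ.trans hκ2
  -- a choice of points in intersections
  have hc : ∀ V : Set (Set X), ∃ x : X, (⋂₀ V).Nonempty → x ∈ ⋂₀ V := by
    intro V
    by_cases h : (⋂₀ V).Nonempty
    · exact ⟨h.some, fun _ => h.some_mem⟩
    · exact ⟨hX.some, fun h' => absurd h' h⟩
  choose c hc using hc
  have hg : ∀ A : Set X, ∃ U : Set X, #A ≤ 2 ^ κ →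
      IsOpen U ∧ U.Nonempty ∧ closure U ∩ thetaClosure A = ∅ := by
    intro A
    by_cases h : #A ≤ 2 ^ κ
    · obtain ⟨U, hU⟩ := exists_open_of_thetaClosure_ne (hno A h)
      exact ⟨U, fun _ => hU⟩
    · exact ⟨∅, fun h' => absurd h' h⟩
  choose g hg using hg
  let P : Set (Set X) → Set X := fun T => c '' {V | V ⊆ T ∧ #V ≤ κ}
  have hP : ∀ T : Set (Set X), #T ≤ 2 ^ κ → #(P T) ≤ 2 ^ κ := by
    intro T hT
    calc #(P T) ≤ #{V : Set (Set X) | V ⊆ T ∧ #V ≤ κ} := mk_image_le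
      _ ≤ max #T ℵ₀ ^ κ := mk_bounded_subset_le T κ
      _ ≤ (2 ^ κ) ^ κ := power_le_power_right (max_le hT h2inf)
      _ = 2 ^ κ := by rw [← power_mul, mul_eq_self hκ]
  obtain ⟨U, hU⟩ := exists_rec_image (ι := lam.ord.ToType) (fun T : Set (Set X) => g (P T))
  have hcard : ∀ i, #(P (U '' Iio i)) ≤ 2 ^ κ := by
    intro i
    apply hP
    exact mk_image_le.trans (Order.lt_succ_iff.1 ((mk_Iio_ord_toType i).trans_le h2))
  have hUp : ∀ i, IsOpen (U i) ∧ (U i).Nonempty ∧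
      closure (U i) ∩ thetaClosure (P (U '' Iio i)) = ∅ := by
    intro i
    have := hg _ (hcard i)
    rw [hU i]
    exact this
  obtain ⟨S, hS, p, hp⟩ := hcal lam.ord.ToType U (mk_ord_toType lam)
    (fun i => ⟨(hUp i).1, (hUp i).2.1⟩)
  have hbig := exists_large_initial hκ S (by rw [hS]; exact h1)
  set J : Set lam.ord.ToType := {a | a ∈ S ∧ #(S ∩ Iic a : Set lam.ord.ToType) ≤ κ} with hJ
  let f : J → X := fun a => c (U '' (S ∩ Iic a.1))
  refine absurd (hF J f ?_) (not_le.2 hbig)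
  have hfmem : ∀ a : J, f a ∈ ⋂₀ (U '' (S ∩ Iic a.1)) := by
    intro a
    apply hc
    refine ⟨p, ?_⟩
    rintro _ ⟨b, hb, rfl⟩
    exact mem_iInter₂.1 hp b hb.1
  intro i
  have hA : f '' {j | j < i} ⊆ P (U '' Iio i.1) := by
    rintro _ ⟨j, hj, rfl⟩
    refine ⟨_, ⟨image_mono ?_, mk_image_le.trans j.2.2⟩, rfl⟩
    intro b hb
    exact lt_of_le_of_lt (show b ≤ j.1 from hb.2) hj
  have hB : f '' {j | i ≤ j} ⊆ U i.1 := by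
    rintro _ ⟨j, hj, rfl⟩
    exact hfmem j _ ⟨i.1, ⟨i.2.1, hj⟩, rfl⟩
  rw [← Set.subset_empty_iff, ← (hUp i.1).2.2, inter_comm]
  exact inter_subset_inter (closure_mono hB) (thetaClosure_mono hA)
end
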